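/- Let 𝒫 be defined on Schwartz functions on ℝ^{2d+1} by (𝒫f)(Y, s) := ½ ∫_{−∞}^{s} (f(Y, s') − f(Y, −s')) ds'. Then ∂_s (𝒫f)(Y, s) = ½(f(Y, s) − f(Y, −s)), and 𝒫f is again a Schwartz function. -/

import Mathlib

/-!
Twice the odd part of `f` in its last variable is a Schwartz function whose integral over every line
in that direction vanishes, and `𝒫 f` is half of its primitive along these lines. Writing such
a primitive as `∫_{t ≤ 0} h (w + t v) dt` puts all dependence on `w` into a Schwartz function, so
derivatives pass under the integral sign. Decay comes from choosing the half-line: a norming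
functional of `v` shows that `‖t v‖ ≤ ‖w + t v‖`, and therefore `‖w‖ ≤ 2 ‖w + t v‖`, along one
of the two half-lines issuing from `w`; since the whole line integral vanishes, either half-line
computes the primitive up to sign. This real-variable argument replaces division by the frequency
dual to the last variable.
-/

open MeasureTheory

variable {d : ℕ}

/-- The operator `𝒫 f (Y,s) = ½ ∫_{−∞}^{s} (f(Y,s') − f(Y,−s')) ds'`. -/
noncomputable def Pop (f : ((Fin (2 * d) → ℝ) × ℝ) → ℂ) :
    ((Fin (2 * d) → ℝ) × ℝ) → ℂ := fun w =>
  (1 / 2 : ℂ) * ∫ s' in Set.Iic w.2, (f (w.1, s') - f (w.1, -s'))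

open scoped SchwartzMap ContDiff

section NormInequalities

variable {E F : Type*} [SeminormedAddCommGroup E] [SeminormedAddCommGroup F] {g : E → F} {C : ℝ}

theorem one_add_norm_le_one_add_norm_mul_one_add_norm_add (x y : E) :
    1 + ‖y‖ ≤ (1 + ‖x‖) * (1 + ‖x + y‖) := by
  have htriangle : ‖y‖ ≤ ‖x + y‖ + ‖x‖ := by simpa using norm_sub_le (x + y) x
  linarith [mul_nonneg (norm_nonneg x) (norm_nonneg (x + y))]

theorem norm_apply_add_le_of_one_add_norm_sq_mul_le (hgC : ∀ x, (1 + ‖x‖) ^ 2 * ‖g x‖ ≤ C)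
    (x y : E) : ‖g (x + y)‖ ≤ C * (1 + ‖x‖) ^ 2 * ((1 + ‖y‖) ^ 2)⁻¹ := by
  rw [← div_eq_mul_inv, le_div_iff₀ (by positivity)]
  calc ‖g (x + y)‖ * (1 + ‖y‖) ^ 2
      ≤ ‖g (x + y)‖ * ((1 + ‖x‖) * (1 + ‖x + y‖)) ^ 2 := by
        gcongr
        exact one_add_norm_le_one_add_norm_mul_one_add_norm_add x y
    _ = (1 + ‖x + y‖) ^ 2 * ‖g (x + y)‖ * (1 + ‖x‖) ^ 2 := by ring
    _ ≤ C * (1 + ‖x‖) ^ 2 := by gcongr; exact hgC (x + y)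

theorem norm_pow_mul_norm_apply_add_le {k : ℕ} (hgC : ∀ x, (1 + ‖x‖) ^ (k + 2) * ‖g x‖ ≤ C)
    {x y : E} (hxy : ‖y‖ ≤ ‖x + y‖) :
    ‖x‖ ^ k * ‖g (x + y)‖ ≤ 2 ^ k * C * ((1 + ‖y‖) ^ 2)⁻¹ := by
  have hx : ‖x‖ ≤ 2 * (1 + ‖x + y‖) := by
    have : ‖x‖ ≤ ‖x + y‖ + ‖y‖ := by simpa using norm_sub_le (x + y) y
    linarith
  rw [← div_eq_mul_inv, le_div_iff₀ (by positivity)]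
  calc ‖x‖ ^ k * ‖g (x + y)‖ * (1 + ‖y‖) ^ 2
      ≤ (2 * (1 + ‖x + y‖)) ^ k * ‖g (x + y)‖ * (1 + ‖x + y‖) ^ 2 := by gcongr
    _ = 2 ^ k * ((1 + ‖x + y‖) ^ (k + 2) * ‖g (x + y)‖) := by rw [mul_pow]; ring
    _ ≤ 2 ^ k * C := by gcongr; exact hgC (x + y)

theorem forall_nonpos_or_forall_nonneg_norm_smul_le_norm_add_smul [NormedSpace ℝ E] (v w : E) :
    (∀ t : ℝ, t ≤ 0 → ‖t • v‖ ≤ ‖w + t • v‖) ∨ (∀ t : ℝ, 0 ≤ t → ‖t • v‖ ≤ ‖w + t • v‖) := by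
  obtain ⟨ℓ, hℓ, hℓv⟩ := exists_dual_vector'' ℝ v
  have hbound (t : ℝ) : |ℓ w + t * ‖v‖| ≤ ‖w + t • v‖ := by
    simpa [hℓv] using ℓ.le_of_opNorm_le hℓ (w + t • v)
  refine (le_total (ℓ w) 0).imp (fun hw t ht => ?_) fun hw t ht => ?_
  · rw [norm_smul, Real.norm_of_nonpos ht]
    linarith [neg_le_abs (ℓ w + t * ‖v‖), hbound t]
  · rw [norm_smul, Real.norm_of_nonneg ht]
    linarith [le_abs_self (ℓ w + t * ‖v‖), hbound t]

end NormInequalities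

section RealIntegrals

variable {F : Type*} [NormedAddCommGroup F] [NormedSpace ℝ F]

theorem hasDerivAt_integral_Iic [CompleteSpace F] {g : ℝ → F} (hg : Continuous g)
    (hint : Integrable g) (s : ℝ) :
    HasDerivAt (fun t => ∫ x in Set.Iic t, g x) (g s) s := by
  have h := (hg.integral_hasStrictDerivAt 0 s).hasDerivAt.const_add (∫ x in Set.Iic 0, g x)
  refine h.congr_of_eventuallyEq (.of_forall fun t => ?_)
  simp only [← intervalIntegral.integral_Iic_sub_Iic hint.integrableOn hint.integrableOn,
    add_sub_cancel]

theorem integral_eq_zero_of_odd {G : Type*} [MeasurableSpace G] [AddGroup G] [MeasurableNeg G]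
    {μ : Measure G} [μ.IsNegInvariant] {g : G → F} (hg : Function.Odd g) : ∫ x, g x ∂μ = 0 := by
  have : IsAddTorsionFree F := .of_isTorsionFree ℝ F
  rw [← self_eq_neg, ← integral_neg, ← integral_neg_eq_self]
  simp only [hg _]

theorem norm_integral_Iic_eq_norm_integral_Ioi {g : ℝ → F} (hg : Integrable g)
    (hzero : ∫ t, g t = 0) (b : ℝ) : ‖∫ t in Set.Iic b, g t‖ = ‖∫ t in Set.Ioi b, g t‖ := by
  have hsplit := intervalIntegral.integral_Iic_add_Ioi (b := b) hg.integrableOn hg.integrableOn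
  rw [hzero, add_eq_zero_iff_eq_neg] at hsplit
  rw [hsplit, norm_neg]

end RealIntegrals

section LineIntegrals

variable {E F : Type*} [NormedAddCommGroup E] [NormedSpace ℝ E] [NormedAddCommGroup F]
  {g : E → F} {v : E} {C : ℝ}

theorem integrable_inv_one_add_norm_smul_sq (hv : v ≠ 0) :
    Integrable fun t : ℝ => ((1 + ‖t • v‖) ^ 2)⁻¹ := by
  have hline : Integrable fun x : ℝ => ((1 + ‖x‖) ^ 2)⁻¹ := by
    simpa [Real.rpow_neg, add_nonneg] using
      integrable_one_add_norm (E := ℝ) (μ := volume) (r := 2) (by simp)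
  simpa [norm_smul] using hline.comp_mul_right' (norm_ne_zero_iff.2 hv)

theorem integrable_comp_add_smul (hv : v ≠ 0) (hg : Continuous g)
    (hgC : ∀ x, (1 + ‖x‖) ^ 2 * ‖g x‖ ≤ C) (w : E) : Integrable fun t : ℝ => g (w + t • v) :=
  ((integrable_inv_one_add_norm_smul_sq hv).const_mul (C * (1 + ‖w‖) ^ 2)).mono'
    (by fun_prop : Continuous fun t : ℝ => g (w + t • v)).aestronglyMeasurable
    (.of_forall fun t => norm_apply_add_le_of_one_add_norm_sq_mul_le hgC w (t • v))

variable [NormedSpace ℝ F]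

theorem hasFDerivAt_setIntegral_add_smul {g' : E → E →L[ℝ] F} {C' : ℝ} (hv : v ≠ 0)
    (hg : ∀ x, HasFDerivAt g (g' x) x) (hg' : Continuous g')
    (hgC : ∀ x, (1 + ‖x‖) ^ 2 * ‖g x‖ ≤ C) (hgC' : ∀ x, (1 + ‖x‖) ^ 2 * ‖g' x‖ ≤ C')
    (S : Set ℝ) (w : E) :
    HasFDerivAt (fun w => ∫ t in S, g (w + t • v)) (∫ t in S, g' (w + t • v)) w := by
  have hgcont : Continuous g := continuous_iff_continuousAt.2 fun x => (hg x).continuousAt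
  have hC' : 0 ≤ C' := le_trans (by positivity) (hgC' 0)
  refine hasFDerivAt_integral_of_dominated_of_fderiv_le (F' := fun w t => g' (w + t • v))
    (bound := fun t => C' * (1 + (‖w‖ + 1)) ^ 2 * ((1 + ‖t • v‖) ^ 2)⁻¹)
    (Metric.ball_mem_nhds w one_pos)
    (.of_forall fun x => (integrable_comp_add_smul hv hgcont hgC x).integrableOn.1)
    (integrable_comp_add_smul hv hgcont hgC w).integrableOn
    (integrable_comp_add_smul hv hg' hgC' w).integrableOn.1
    (.of_forall fun t x hx => ?_)
    ((integrable_inv_one_add_norm_smul_sq hv).const_mul _).integrableOn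
    (.of_forall fun t x _ => (hasFDerivAt_comp_add_right _).2 (hg _))
  have hxw : ‖x‖ ≤ ‖w‖ + 1 := by
    linarith [norm_sub_norm_le x w, mem_ball_iff_norm.1 hx]
  exact (norm_apply_add_le_of_one_add_norm_sq_mul_le hgC' x (t • v)).trans (by gcongr)

theorem norm_pow_mul_norm_setIntegral_add_smul_le {k : ℕ} {S : Set ℝ} {w : E} (hv : v ≠ 0)
    (hgC : ∀ x, (1 + ‖x‖) ^ (k + 2) * ‖g x‖ ≤ C) (hS : MeasurableSet S)
    (hwS : ∀ t ∈ S, ‖t • v‖ ≤ ‖w + t • v‖) :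
    ‖w‖ ^ k * ‖∫ t in S, g (w + t • v)‖ ≤ ∫ t : ℝ, 2 ^ k * C * ((1 + ‖t • v‖) ^ 2)⁻¹ := by
  have hbound : Integrable fun t : ℝ => 2 ^ k * C * ((1 + ‖t • v‖) ^ 2)⁻¹ :=
    (integrable_inv_one_add_norm_smul_sq hv).const_mul _
  have hC : 0 ≤ C := le_trans (by positivity) (hgC 0)
  calc ‖w‖ ^ k * ‖∫ t in S, g (w + t • v)‖
      = ‖∫ t in S, ‖w‖ ^ k • g (w + t • v)‖ := by
        rw [integral_smul, norm_smul, norm_pow, norm_norm]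
    _ ≤ ∫ t in S, 2 ^ k * C * ((1 + ‖t • v‖) ^ 2)⁻¹ := by
        refine norm_integral_le_of_norm_le hbound.integrableOn
          (ae_restrict_of_forall_mem hS fun t ht => ?_)
        rw [norm_smul, norm_pow, norm_norm]
        exact norm_pow_mul_norm_apply_add_le hgC (hwS t ht)
    _ ≤ ∫ t : ℝ, 2 ^ k * C * ((1 + ‖t • v‖) ^ 2)⁻¹ :=
        setIntegral_le_integral hbound (.of_forall fun t => by positivity)

theorem norm_pow_mul_norm_integral_Iic_add_smul_le {k : ℕ} {w : E} (hv : v ≠ 0)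
    (hg : Continuous g) (hgC : ∀ x, (1 + ‖x‖) ^ (k + 2) * ‖g x‖ ≤ C)
    (hzero : ∫ t : ℝ, g (w + t • v) = 0) :
    ‖w‖ ^ k * ‖∫ t in Set.Iic (0 : ℝ), g (w + t • v)‖ ≤
      ∫ t : ℝ, 2 ^ k * C * ((1 + ‖t • v‖) ^ 2)⁻¹ := by
  rcases forall_nonpos_or_forall_nonneg_norm_smul_le_norm_add_smul v w with hw | hw
  · exact norm_pow_mul_norm_setIntegral_add_smul_le hv hgC measurableSet_Iic hw
  · have hgC₂ (x : E) : (1 + ‖x‖) ^ 2 * ‖g x‖ ≤ C :=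
      le_trans (by gcongr <;> simp) (hgC x)
    rw [norm_integral_Iic_eq_norm_integral_Ioi (integrable_comp_add_smul hv hg hgC₂ w) hzero]
    exact norm_pow_mul_norm_setIntegral_add_smul_le hv hgC measurableSet_Ioi
      fun t ht => hw t ht.le

end LineIntegrals

section SchwartzPrimitive

variable {E F : Type*} [NormedAddCommGroup E] [NormedSpace ℝ E]
  [NormedAddCommGroup F] [NormedSpace ℝ F] {v : E}

theorem exists_one_add_norm_pow_mul_norm_iteratedFDeriv_le (f : 𝓢(E, F)) (k n : ℕ) :
    ∃ C, ∀ x, (1 + ‖x‖) ^ k * ‖iteratedFDeriv ℝ n f x‖ ≤ C :=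
  ⟨_, SchwartzMap.one_add_le_sup_seminorm_apply (𝕜 := ℝ) (m := (k, n)) le_rfl le_rfl f⟩

theorem integrable_schwartzMap_comp_add_smul (f : 𝓢(E, F)) (hv : v ≠ 0) (w : E) :
    Integrable fun t : ℝ => f (w + t • v) := by
  obtain ⟨C, hC⟩ := exists_one_add_norm_pow_mul_norm_iteratedFDeriv_le f 2 0
  simp only [norm_iteratedFDeriv_zero] at hC
  exact integrable_comp_add_smul hv f.continuous hC w

theorem integral_curryLeft {X : Type*} [MeasurableSpace X] {μ : Measure X} {n : ℕ}
    (φ : X → ContinuousMultilinearMap ℝ (fun _ : Fin (n + 1) => E) F) :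
    ∫ x, (φ x).curryLeft ∂μ = (∫ x, φ x ∂μ).curryLeft :=
  ContinuousLinearEquiv.integral_comp_comm (𝕜 := ℝ)
    (E := ContinuousMultilinearMap ℝ (fun _ : Fin (n + 1) => E) F)
    (F := E →L[ℝ] ContinuousMultilinearMap ℝ (fun _ : Fin n => E) F)
    (continuousMultilinearCurryLeftEquiv ℝ (fun _ : Fin (n + 1) => E) F) φ

theorem hasFTaylorSeriesUpTo_setIntegral_add_smul (f : 𝓢(E, F)) (hv : v ≠ 0) (S : Set ℝ) :
    HasFTaylorSeriesUpTo ∞ (fun w => ∫ t in S, f (w + t • v))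
      (fun w n => ∫ t in S, iteratedFDeriv ℝ n f (w + t • v)) := by
  have hf : HasFTaylorSeriesUpTo ∞ f (ftaylorSeries ℝ f) :=
    (contDiff_iff_ftaylorSeries).1 (f.smooth ⊤)
  refine (hasFTaylorSeriesUpTo_top_iff' le_rfl).2 ⟨fun w => ?_, fun n w => ?_⟩
  · exact ((continuousMultilinearCurryFin0 ℝ E F).toContinuousLinearEquiv.integral_comp_comm
      _).symm
  · obtain ⟨C, hC⟩ := exists_one_add_norm_pow_mul_norm_iteratedFDeriv_le f 2 n
    obtain ⟨C', hC'⟩ := exists_one_add_norm_pow_mul_norm_iteratedFDeriv_le f 2 (n + 1)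
    rw [← integral_curryLeft]
    exact hasFDerivAt_setIntegral_add_smul hv
      (fun x => hf.fderiv n (mod_cast WithTop.coe_lt_top n) x)
      ((continuousMultilinearCurryLeftEquiv ℝ (fun _ : Fin (n + 1) => E) F).continuous.comp
        ((f.smooth (n + 1 : ℕ)).continuous_iteratedFDeriv le_rfl))
      hC (by simpa only [ftaylorSeries, ContinuousMultilinearMap.curryLeft_norm] using hC') S w

theorem iteratedFDeriv_setIntegral_add_smul (f : 𝓢(E, F)) (hv : v ≠ 0) (S : Set ℝ) (n : ℕ)
    (w : E) :
    iteratedFDeriv ℝ n (fun w => ∫ t in S, f (w + t • v)) w =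
      ∫ t in S, iteratedFDeriv ℝ n f (w + t • v) :=
  ((hasFTaylorSeriesUpTo_setIntegral_add_smul f hv S).eq_iteratedFDeriv
    (by exact_mod_cast le_top) w).symm

theorem integral_iteratedFDeriv_add_smul_eq_zero {f : 𝓢(E, F)} (hv : v ≠ 0)
    (hf : ∀ w, ∫ t : ℝ, f (w + t • v) = 0) (n : ℕ) (w : E) :
    ∫ t : ℝ, iteratedFDeriv ℝ n f (w + t • v) = 0 := by
  simpa [hf] using (iteratedFDeriv_setIntegral_add_smul f hv Set.univ n w).symm

theorem exists_norm_pow_mul_norm_iteratedFDeriv_integral_Iic_add_smul_le {f : 𝓢(E, F)}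
    (hv : v ≠ 0) (hf : ∀ w, ∫ t : ℝ, f (w + t • v) = 0) (k n : ℕ) :
    ∃ C, ∀ w, ‖w‖ ^ k *
      ‖iteratedFDeriv ℝ n (fun w => ∫ t in Set.Iic (0 : ℝ), f (w + t • v)) w‖ ≤ C := by
  obtain ⟨C, hC⟩ := exists_one_add_norm_pow_mul_norm_iteratedFDeriv_le f (k + 2) n
  refine ⟨∫ t : ℝ, 2 ^ k * C * ((1 + ‖t • v‖) ^ 2)⁻¹, fun w => ?_⟩
  rw [iteratedFDeriv_setIntegral_add_smul f hv]
  exact norm_pow_mul_norm_integral_Iic_add_smul_le hv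
    ((f.smooth n).continuous_iteratedFDeriv le_rfl) hC
    (integral_iteratedFDeriv_add_smul_eq_zero hv hf n w)

/-- The primitive in direction `v`, vanishing at infinity, of a Schwartz function whose integral
over every line parallel to `v` is zero. -/
noncomputable def schwartzPrimitiveAlong (f : 𝓢(E, F)) (hv : v ≠ 0)
    (hf : ∀ w, ∫ t : ℝ, f (w + t • v) = 0) : 𝓢(E, F) where
  toFun w := ∫ t in Set.Iic (0 : ℝ), f (w + t • v)
  smooth' := (hasFTaylorSeriesUpTo_setIntegral_add_smul f hv _).contDiff
  decay' := exists_norm_pow_mul_norm_iteratedFDeriv_integral_Iic_add_smul_le hv hf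

theorem schwartzPrimitiveAlong_add_smul (f : 𝓢(E, F)) (hv : v ≠ 0)
    (hf : ∀ w, ∫ t : ℝ, f (w + t • v) = 0) (w : E) (s : ℝ) :
    schwartzPrimitiveAlong f hv hf (w + s • v) = ∫ t in Set.Iic s, f (w + t • v) := by
  have h := (measurePreserving_add_left (volume : Measure ℝ) s).setIntegral_preimage_emb
    (measurableEmbedding_addLeft s) (fun t => f (w + t • v)) (Set.Iic s)
  rw [← h, Set.preimage_const_add_Iic, sub_self]
  simp only [add_smul, ← add_assoc]
  rfl

end SchwartzPrimitive

section OddPart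

variable {E F : Type*} [NormedAddCommGroup E] [NormedSpace ℝ E]
  [NormedAddCommGroup F] [NormedSpace ℝ F]

/-- The function `(Y, s) ↦ f (Y, s) - f (Y, -s)`, twice the odd part of `f` in its last variable,
whose primitive defines `Pop f`. -/
noncomputable def subReflectSnd (f : 𝓢(E × ℝ, F)) : 𝓢(E × ℝ, F) :=
  f - SchwartzMap.compCLMOfContinuousLinearEquiv ℝ
    ((ContinuousLinearEquiv.refl ℝ E).prodCongr (ContinuousLinearEquiv.neg ℝ)) f

theorem subReflectSnd_apply (f : 𝓢(E × ℝ, F)) (Y : E) (s : ℝ) :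
    subReflectSnd f (Y, s) = f (Y, s) - f (Y, -s) := by
  simp [subReflectSnd]

theorem integral_subReflectSnd_add_smul_eq_zero (f : 𝓢(E × ℝ, F)) (w : E × ℝ) :
    ∫ t : ℝ, subReflectSnd f (w + t • (0, 1)) = 0 := by
  have hodd : Function.Odd fun t : ℝ => subReflectSnd f (w.1, t) := fun t => by
    simp [subReflectSnd_apply]
  calc ∫ t : ℝ, subReflectSnd f (w + t • (0, 1))
      = ∫ t : ℝ, subReflectSnd f (w.1, w.2 + t) := by simp [Prod.add_def]
    _ = ∫ t : ℝ, subReflectSnd f (w.1, t) :=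
        integral_add_left_eq_self (fun t => subReflectSnd f (w.1, t)) w.2
    _ = 0 := integral_eq_zero_of_odd hodd

theorem Pop_deriv_and_schwartz_general [CompleteSpace F] (f : 𝓢(E × ℝ, F)) :
    (∀ (Y : E) (s : ℝ),
      HasDerivAt (fun t => (1 / 2 : ℝ) • ∫ s' in Set.Iic t, (f (Y, s') - f (Y, -s')))
        ((1 / 2 : ℝ) • (f (Y, s) - f (Y, -s))) s) ∧
    (∃ g : 𝓢(E × ℝ, F), ∀ w,
      g w = (1 / 2 : ℝ) • ∫ s' in Set.Iic w.2, (f (w.1, s') - f (w.1, -s'))) := by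
  have hv : ((0, 1) : E × ℝ) ≠ 0 := by simp
  have hline (Y : E) (t : ℝ) : (Y, 0) + t • ((0, 1) : E × ℝ) = (Y, t) := by simp
  simp only [← subReflectSnd_apply]
  refine ⟨fun Y s => ?_, (1 / 2 : ℝ) • schwartzPrimitiveAlong (subReflectSnd f) hv
    (integral_subReflectSnd_add_smul_eq_zero f), fun ⟨Y, s⟩ => ?_⟩
  · have hcont : Continuous fun t : ℝ => subReflectSnd f (Y, t) := by fun_prop
    have hint : Integrable fun t : ℝ => subReflectSnd f (Y, t) := by
      simpa only [hline] using integrable_schwartzMap_comp_add_smul (subReflectSnd f) hv (Y, 0)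
    exact (hasDerivAt_integral_Iic hcont hint s).const_smul _
  · have hprim := schwartzPrimitiveAlong_add_smul (subReflectSnd f) hv
      (integral_subReflectSnd_add_smul_eq_zero f) (Y, 0) s
    simp only [hline] at hprim
    rw [smul_apply, hprim]

end OddPart

/-- For any Schwartz function `f` on `ℝ^{2d} × ℝ`,
`∂_s (𝒫f)(Y,s) = ½(f(Y,s) − f(Y,−s))`, and `𝒫f` is again a Schwartz function. -/
theorem Pop_deriv_and_schwartz (f : SchwartzMap ((Fin (2 * d) → ℝ) × ℝ) ℂ) :
    (∀ (Y : Fin (2 * d) → ℝ) (s : ℝ),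
      deriv (fun t => Pop (⇑f) (Y, t)) s = (1 / 2 : ℂ) * (f (Y, s) - f (Y, -s))) ∧
    (∃ g : SchwartzMap ((Fin (2 * d) → ℝ) × ℝ) ℂ, ∀ w, g w = Pop (⇑f) w) := by
  obtain ⟨hderiv, hschwartz⟩ := Pop_deriv_and_schwartz_general f
  exact ⟨fun Y s => by simpa [Pop] using (hderiv Y s).deriv, by simpa [Pop] using hschwartz⟩
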